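/- Let R be a Cohen-Macaulay commutative noetherian local ring. Suppose there are only finitely many isomorphism classes of indecomposable finitely generated R-modules that are maximal Cohen-Macaulay and locally free on the punctured spectrum (i.e., only finitely many isomorphism classes of indecomposable modules in CM_0(R)). Then R is an isolated singularity, that is, R_p is a regular local ring for every nonmaximal prime ideal p of R. -/

import Mathlib

open CategoryTheory IsLocalRing

noncomputable section

/-- The `i`-th Tor module of two `R`-modules, as an object of `ModuleCat R`. -/
def TorMod (R : Type) [CommRing R] (i : ℕ) (M N : ModuleCat.{0} R) : ModuleCat.{0} R :=
  ((Tor (ModuleCat.{0} R) i).obj M).obj N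

/-- The `i`-th Ext module of two `R`-modules, as an object of `ModuleCat R`. -/
def ExtMod (R : Type) [CommRing R] (i : ℕ) (M N : ModuleCat.{0} R) : ModuleCat.{0} R :=
  ((Ext R (ModuleCat.{0} R) i).obj (Opposite.op M)).obj N

/-- Integer-indexed Tor: `Tor_n = 0` for `n < 0`. -/
def TorZ (R : Type) [CommRing R] (n : ℤ) (M N : ModuleCat.{0} R) : ModuleCat.{0} R :=
  if 0 ≤ n then TorMod R n.toNat M N else ModuleCat.of R PUnit

/-- Integer-indexed Ext: `Ext^n = 0` for `n < 0`. -/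
def ExtZ (R : Type) [CommRing R] (n : ℤ) (M N : ModuleCat.{0} R) : ModuleCat.{0} R :=
  if 0 ≤ n then ExtMod R n.toNat M N else ModuleCat.of R PUnit

/-- The depth of a module `N` over a local ring `S`, defined as the infimum of the set of
integers `i` such that `Ext^i(k, N) ≠ 0`, where `k` is the residue field of `S`
(`⊤` if no such `i` exists). -/
def moduleDepth (S : Type) [CommRing S] [IsLocalRing S] (N : Type) [AddCommGroup N]
    [Module S N] : ℕ∞ :=
  sInf {i : ℕ∞ | ∃ j : ℕ, i = (j : ℕ∞) ∧
    Nontrivial (ExtMod S j (ModuleCat.of S (ResidueField S)) (ModuleCat.of S N))}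

/-- A local ring is regular if it is noetherian and its maximal ideal can be generated by
(Krull dimension of `S`)-many elements. -/
def IsRegularLocal (S : Type) [CommRing S] [IsLocalRing S] : Prop :=
  IsNoetherianRing S ∧ ∃ s : Finset S, Ideal.span (s : Set S) = maximalIdeal S ∧
    (s.card : WithBot ℕ∞) = ringKrullDim S

/-- A local ring is Cohen-Macaulay if its depth (as a module over itself) equals its
Krull dimension. -/
def IsCMLocalRing (R : Type) [CommRing R] [IsLocalRing R] : Prop :=
  (moduleDepth R R : WithBot ℕ∞) = ringKrullDim R

/-- A module `M` over a local ring `R` is maximal Cohen-Macaulay if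
`depth M_p ≥ dim R_p` for every prime ideal `p` of `R`. -/
def IsMCMModule (R : Type) [CommRing R] [IsLocalRing R] (M : Type) [AddCommGroup M]
    [Module R M] : Prop :=
  ∀ (p : Ideal R) [p.IsPrime],
    ringKrullDim (Localization.AtPrime p) ≤
      (moduleDepth (Localization.AtPrime p) (LocalizedModule p.primeCompl M) : WithBot ℕ∞)

/-- Membership in `CM(R)`: finitely generated maximal Cohen-Macaulay modules. -/
def MemCM (R : Type) [CommRing R] [IsLocalRing R] (M : ModuleCat.{0} R) : Prop :=
  Module.Finite R M ∧ IsMCMModule R M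

/-- Membership in `CM₀(R)`: finitely generated maximal Cohen-Macaulay modules that are
locally free on the punctured spectrum. -/
def MemCM0 (R : Type) [CommRing R] [IsLocalRing R] (M : ModuleCat.{0} R) : Prop :=
  Module.Finite R M ∧ IsMCMModule R M ∧
    ∀ (p : Ideal R) [p.IsPrime], p ≠ maximalIdeal R →
      Module.Free (Localization.AtPrime p) (LocalizedModule p.primeCompl M)

/-- The singular locus of `R`: primes `p` such that `R_p` is not regular. -/
def singularLocus (R : Type) [CommRing R] : Set (PrimeSpectrum R) :=
  {p | ¬ IsRegularLocal (Localization.AtPrime p.asIdeal)}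

/-- The nonfree locus of a module `M`: primes `p` such that `M_p` is not a free
`R_p`-module. -/
def nonfreeLocus (R : Type) [CommRing R] (M : Type) [AddCommGroup M] [Module R M] :
    Set (PrimeSpectrum R) :=
  {p | ¬ Module.Free (Localization.AtPrime p.asIdeal)
        (LocalizedModule p.asIdeal.primeCompl M)}

/-- `K` is a first syzygy of `N` in a minimal free resolution: there is a surjection
`f : R^n → N` with `ker f ⊆ m·R^n` and `K ≅ ker f`. -/
def IsMinimalSyzygy1 (R : Type) [CommRing R] [IsLocalRing R] (N K : ModuleCat.{0} R) : Prop :=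
  ∃ (n : ℕ) (f : (Fin n → R) →ₗ[R] N), Function.Surjective f ∧
    LinearMap.ker f ≤ (maximalIdeal R) • (⊤ : Submodule R (Fin n → R)) ∧
    Nonempty (K ≃ₗ[R] LinearMap.ker f)

/-- `K` is a `d`-th syzygy of `N` in a minimal free resolution. -/
def IsMinimalSyzygy (R : Type) [CommRing R] [IsLocalRing R] :
    ℕ → ModuleCat.{0} R → ModuleCat.{0} R → Prop
  | 0, N, K => Nonempty ((K : Type) ≃ₗ[R] N)
  | d + 1, N, K => ∃ L : ModuleCat.{0} R, IsMinimalSyzygy1 R N L ∧ IsMinimalSyzygy R d L K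

/-- A module is indecomposable if it is nonzero and is not isomorphic to the direct sum of
two nonzero modules. -/
def IndecomposableModule (R : Type) [CommRing R] (M : Type) [AddCommGroup M] [Module R M] :
    Prop :=
  Nontrivial M ∧ ∀ (A B : Type) [AddCommGroup A] [Module R A] [AddCommGroup B] [Module R B],
    Nonempty (M ≃ₗ[R] A × B) → (Subsingleton A ∨ Subsingleton B)

theorem subsingleton_extMod_iff (S : Type) [CommRing S] (j : ℕ) (N M : ModuleCat.{0} S) :
    Subsingleton (ExtMod S j N M) ↔ Subsingleton (Abelian.Ext N M j) := by
  let P := projectiveResolution N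
  have e : ExtMod S j N M ≅ (P.complex.linearYonedaObj S M).homology j := P.isoExt j M
  rw [← ModuleCat.isZero_iff_subsingleton, e.isZero_iff, ← HomologicalComplex.exactAt_iff_isZero_homology]
  cases j with
  | zero =>
    rw [HomologicalComplex.exactAt_iff' _ 0 0 1 (by simp) (by simp), ShortComplex.moduleCat_exact_iff]
    constructor
    · intro h
      refine ⟨fun a b => ?_⟩
      suffices H : ∀ a : Abelian.Ext N M 0, a = 0 by rw [H a, H b]
      intro a
      obtain ⟨f, hf, rfl⟩ := P.extMk_surjective a 1 rfl
      obtain ⟨g, hg⟩ := h f hf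
      have hg' : (0 : P.complex.X 0 ⟶ M) = f := by
        rw [← hg]
        simp
        rfl
      subst hg'
      simp
    · intro h f hf
      change P.complex.X 0 ⟶ M at f
      change P.complex.d 1 0 ≫ f = 0 at hf
      have hs : Subsingleton (N ⟶ M) := Abelian.Ext.homEquiv₀.subsingleton_congr.mp h
      have h0 : f = 0 := by
        have := P.exact₀.g_desc f hf
        have h2 : P.exact₀.desc f hf = 0 := hs.elim _ _
        rw [← this, h2, Limits.comp_zero]
      exact ⟨0, by rw [h0]; rfl⟩
  | succ n =>
    rw [HomologicalComplex.exactAt_iff' _ n (n+1) (n+2) (by simp) (by simp), ShortComplex.moduleCat_exact_iff]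
    constructor
    · intro h
      refine ⟨fun a b => ?_⟩
      suffices H : ∀ a : Abelian.Ext N M (n+1), a = 0 by rw [H a, H b]
      intro a
      obtain ⟨f, hf, rfl⟩ := P.extMk_surjective a (n+2) rfl
      rw [P.extMk_eq_zero_iff f _ _ hf n rfl]
      obtain ⟨g, hg⟩ := h f hf
      exact ⟨g, hg⟩
    · intro h f hf
      obtain ⟨g, hg⟩ := (P.extMk_eq_zero_iff f (n+2) rfl hf n rfl).1 (Subsingleton.elim _ _)
      exact ⟨g, hg⟩

/-- depth predicate -/
def DP (S : Type) [CommRing S] [IsLocalRing S] (n : ℕ) (M : Type) [AddCommGroup M] [Module S M] :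
    Prop :=
  ∀ i < n, Subsingleton (Abelian.Ext (ModuleCat.of S (ResidueField S)) (ModuleCat.of S M) i)

theorem le_moduleDepth_iff (S : Type) [CommRing S] [IsLocalRing S] (n : ℕ) (M : Type)
    [AddCommGroup M] [Module S M] : (n : ℕ∞) ≤ moduleDepth S M ↔ DP S n M := by
  unfold moduleDepth DP
  rw [le_sInf_iff]
  constructor
  · intro h i hi
    rw [← subsingleton_extMod_iff]
    by_contra hc
    rw [not_subsingleton_iff_nontrivial] at hc
    have := h i ⟨i, rfl, hc⟩
    have : n ≤ i := by exact_mod_cast this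
    omega
  · rintro h _ ⟨j, rfl, hj⟩
    by_contra hc
    have hc : j < n := by simpa using hc
    have := h j hc
    rw [← subsingleton_extMod_iff] at this
    exact not_nontrivial_iff_subsingleton.mpr this hj

theorem dim_eq_nat (S : Type) [CommRing S] [IsLocalRing S] [IsNoetherianRing S] :
    ∃ n : ℕ, ringKrullDim S = n := by
  have h1 : ringKrullDim S ≠ ⊥ := ringKrullDim_ne_bot
  have h2 : ringKrullDim S ≠ ⊤ := ringKrullDim_ne_top
  obtain ⟨a, ha⟩ := WithBot.ne_bot_iff_exists.1 h1
  have h3 : a ≠ ⊤ := by rintro rfl; exact h2 ha.symm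
  obtain ⟨n, rfl⟩ := ENat.ne_top_iff_exists.1 h3
  exact ⟨n, ha.symm⟩

theorem isMCM_iff (R : Type) [CommRing R] [IsNoetherianRing R] [IsLocalRing R] (M : Type) [AddCommGroup M]
    [Module R M] : IsMCMModule R M ↔ ∀ (p : Ideal R) [p.IsPrime], ∀ n : ℕ,
      ringKrullDim (Localization.AtPrime p) = n →
        DP (Localization.AtPrime p) n (LocalizedModule p.primeCompl M) := by
  constructor
  · intro h p _ n hn
    rw [← le_moduleDepth_iff]
    have := h p
    rw [hn] at this
    exact_mod_cast this
  · intro h p _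
    have : IsNoetherianRing (Localization.AtPrime p) :=
      IsLocalization.isNoetherianRing p.primeCompl _ inferInstance
    obtain ⟨n, hn⟩ := dim_eq_nat (Localization.AtPrime p)
    have := (le_moduleDepth_iff _ _ _).2 (h p n hn)
    rw [hn]
    exact_mod_cast this

theorem shortExact_of {S : Type} [CommRing S] {A B C : Type} [AddCommGroup A] [AddCommGroup B]
    [AddCommGroup C] [Module S A] [Module S B] [Module S C] (f : A →ₗ[S] B) (g : B →ₗ[S] C)
    (hf : Function.Injective f) (hg : Function.Surjective g) (h : Function.Exact f g) :
    (ModuleCat.shortComplexOfCompEqZero f g h.linearMap_comp_eq_zero).ShortExact :=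
  { exact := ModuleCat.shortComplex_exact _ h
    mono_f := by simpa [ModuleCat.mono_iff_injective] using! hf
    epi_g := by simpa [ModuleCat.epi_iff_surjective] using! hg }

theorem subsingleton_ext_of_retract {S : Type} [CommRing S] {X A M : ModuleCat.{0} S}
    (i : A ⟶ M) (r : M ⟶ A) (h : i ≫ r = 𝟙 A) (n : ℕ) [Subsingleton (Abelian.Ext X M n)] :
    Subsingleton (Abelian.Ext X A n) := by
  refine ⟨fun a b => ?_⟩
  suffices H : ∀ a : Abelian.Ext X A n, a = 0 by rw [H a, H b]
  intro a
  have h1 : (a.comp (Abelian.Ext.mk₀ i) (add_zero n)).comp (Abelian.Ext.mk₀ r) (add_zero n) = a := by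
    rw [Abelian.Ext.comp_assoc_of_third_deg_zero, Abelian.Ext.mk₀_comp_mk₀, h, Abelian.Ext.comp_mk₀_id]
  rw [← h1, Subsingleton.elim (a.comp (Abelian.Ext.mk₀ i) (add_zero n)) 0, Abelian.Ext.zero_comp]

section
variable {S : Type} [CommRing S] [IsLocalRing S] {A B C : Type} [AddCommGroup A] [AddCommGroup B]
    [AddCommGroup C] [Module S A] [Module S B] [Module S C]

theorem DP.mono {n m : ℕ} (h : DP S n A) (hm : m ≤ n) : DP S m A := fun i hi => h i (by omega)

theorem DP.retract {n : ℕ} (h : DP S n B) (i : A →ₗ[S] B) (r : B →ₗ[S] A) (hr : r ∘ₗ i = LinearMap.id) :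
    DP S n A := by
  intro j hj
  have := h j hj
  refine subsingleton_ext_of_retract (M := ModuleCat.of S B) (ModuleCat.ofHom i) (ModuleCat.ofHom r) ?_ j
  rw [← ModuleCat.ofHom_comp, hr]; rfl

theorem DP.of_equiv {n : ℕ} (h : DP S n B) (e : A ≃ₗ[S] B) : DP S n A :=
  h.retract e.toLinearMap e.symm.toLinearMap (by ext; simp)

theorem DP.left {n : ℕ} (f : A →ₗ[S] B) (g : B →ₗ[S] C)
    (hf : Function.Injective f) (hg : Function.Surjective g) (h : Function.Exact f g)
    (hB : DP S (n+1) B) (hC : DP S n C) : DP S (n+1) A := by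
  intro i hi
  have hS := shortExact_of f g hf hg h
  refine ⟨fun a b => ?_⟩
  suffices H : ∀ a : Abelian.Ext (ModuleCat.of S (ResidueField S)) (ModuleCat.of S A) i, a = 0 by
    rw [H a, H b]
  intro a
  have := hB i hi
  have h0 : a.comp (Abelian.Ext.mk₀ (ModuleCat.ofHom f)) (add_zero i) = 0 := Subsingleton.elim _ _
  cases i with
  | zero =>
    have : Mono (ModuleCat.ofHom f) := hS.mono_f
    apply Abelian.Ext.postcomp_mk₀_injective_of_mono _ (ModuleCat.ofHom f)
    change a.comp (Abelian.Ext.mk₀ (ModuleCat.ofHom f)) (add_zero 0) = _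
    rw [h0]; simp
  | succ j =>
    obtain ⟨x, hx⟩ := Abelian.Ext.covariant_sequence_exact₁ _ hS a h0 rfl
    have := hC j (by omega)
    have hx0 : x = 0 := this.elim _ _
    rw [← hx, hx0, Abelian.Ext.zero_comp]

theorem DP.mid {n : ℕ} (f : A →ₗ[S] B) (g : B →ₗ[S] C)
    (hf : Function.Injective f) (hg : Function.Surjective g) (h : Function.Exact f g)
    (hA : DP S n A) (hC : DP S n C) : DP S n B := by
  intro i hi
  have hS := shortExact_of f g hf hg h
  refine ⟨fun a b => ?_⟩
  suffices H : ∀ a : Abelian.Ext (ModuleCat.of S (ResidueField S)) (ModuleCat.of S B) i, a = 0 by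
    rw [H a, H b]
  intro a
  have h2 := hA i hi
  have h3 := hC i hi
  obtain ⟨x, hx⟩ := Abelian.Ext.covariant_sequence_exact₂ _ hS a (h3.elim _ _)
  have hx0 : x = 0 := h2.elim _ _
  rw [← hx, hx0, Abelian.Ext.zero_comp]

theorem DP.of_subsingleton [Subsingleton A] (n : ℕ) : DP S n A := by
  intro i hi
  refine ⟨fun a b => ?_⟩
  suffices H : ∀ a : Abelian.Ext (ModuleCat.of S (ResidueField S)) (ModuleCat.of S A) i, a = 0 by
    rw [H a, H b]
  intro a
  have : 𝟙 (ModuleCat.of S A) = 0 := by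
    ext x; exact Subsingleton.elim (α := A) _ _
  rw [← a.comp_mk₀_id, this]; simp

theorem DP.pi {n : ℕ} (hA : DP S n A) (r : ℕ) : DP S n (Fin r → A) := by
  induction r with
  | zero => exact DP.of_subsingleton n
  | succ r ih =>
    have h : DP S n (A × (Fin r → A)) :=
      DP.mid (LinearMap.inl S A (Fin r → A)) (LinearMap.snd S A (Fin r → A)) LinearMap.inl_injective
        LinearMap.snd_surjective Function.Exact.inl_snd hA ih
    exact h.of_equiv (Fin.consLinearEquiv S (fun _ => A)).symm

theorem DP.free {n : ℕ} (hS : DP S n S) [Module.Finite S A] [Module.Free S A] : DP S n A := by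
  have b := Module.finBasis S A
  exact (hS.pi _).of_equiv b.equivFun
end

theorem subsingleton_ext_of_iso {S : Type} [CommRing S] {A B M : ModuleCat.{0} S}
    (e : A ≅ B) (n : ℕ) [Subsingleton (Abelian.Ext B M n)] :
    Subsingleton (Abelian.Ext A M n) := by
  refine ⟨fun a b => ?_⟩
  suffices H : ∀ a : Abelian.Ext A M n, a = 0 by rw [H a, H b]
  intro a
  have h1 : (Abelian.Ext.mk₀ e.hom).comp ((Abelian.Ext.mk₀ e.inv).comp a (zero_add n)) (zero_add n) = a := by
    rw [Abelian.Ext.mk₀_comp_mk₀_assoc]; simp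
  rw [← h1, Subsingleton.elim ((Abelian.Ext.mk₀ e.inv).comp a (zero_add n)) 0, Abelian.Ext.comp_zero]

theorem ischebeck (R : Type) [CommRing R] [IsNoetherianRing R] [IsLocalRing R] (d : ℕ)
    (hd : DP R d R) (r : ℕ) : ∀ (N : Type) [AddCommGroup N] [Module R N] [Module.Finite R N],
    Module.supportDim R N ≤ r → ∀ i, i + r < d →
      Subsingleton (Abelian.Ext (ModuleCat.of R N) (ModuleCat.of R R) i) := by
  induction r using Nat.strong_induction_on with
  | _ r ih =>
  intro N _ _ hN
  induction hN using IsNoetherianRing.induction_on_isQuotientEquivQuotientPrime R with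
  | subsingleton N =>
    intro _ i _
    refine ⟨fun a b => ?_⟩
    suffices H : ∀ a : Abelian.Ext (ModuleCat.of R N) (ModuleCat.of R R) i, a = 0 by
      rw [H a, H b]
    intro a
    have : 𝟙 (ModuleCat.of R N) = 0 := by
      ext x; exact Subsingleton.elim (α := N) _ _
    rw [← a.mk₀_id_comp, this]; simp
  | exact N₁ N₂ N₃ f g hf hg hfg h₁ h₃ =>
    intro hdim i hi
    have h1 := h₁ ((Module.supportDim_le_of_injective f hf).trans hdim) i hi
    have h3 := h₃ ((Module.supportDim_le_of_surjective g hg).trans hdim) i hi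
    have hS := shortExact_of f g hf hg hfg
    refine ⟨fun a b => ?_⟩
    suffices H : ∀ a : Abelian.Ext (ModuleCat.of R N₂) (ModuleCat.of R R) i, a = 0 by
      rw [H a, H b]
    intro a
    obtain ⟨x, hx⟩ := Abelian.Ext.contravariant_sequence_exact₂ hS _ a (h1.elim _ _)
    have hx0 : x = 0 := h3.elim _ _
    rw [← hx, hx0, Abelian.Ext.comp_zero]
  | quotient N q e =>
    intro hdim i hi
    by_cases hq : q.1 = maximalIdeal R
    · have := hd i (by omega)
      have e' : N ≃ₗ[R] ResidueField R := e.trans (Submodule.quotEquivOfEq _ _ hq)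
      exact subsingleton_ext_of_iso e'.toModuleIso i
    · have hle : q.1 ≤ maximalIdeal R := IsLocalRing.le_maximalIdeal q.2.ne_top
      obtain ⟨x, hxm, hxq⟩ := SetLike.exists_of_lt (lt_of_le_of_ne hle hq)
      have hreg : IsSMulRegular N x := by
        intro a b hab
        apply e.injective
        have h2 : x • (e a - e b) = 0 := by
          rw [smul_sub, ← map_smul, ← map_smul]; exact sub_eq_zero.2 (congrArg e hab)
        obtain ⟨y, hy⟩ := Ideal.Quotient.mk_surjective (e a - e b)
        rw [← hy] at h2
        have h3 : x * y ∈ q.1 := Ideal.Quotient.eq_zero_iff_mem.1 h2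
        have h4 := (q.2.mem_or_mem h3).resolve_left hxq
        rw [Ideal.Quotient.eq_zero_iff_mem.2 h4] at hy
        exact sub_eq_zero.1 hy.symm
      have hs := Module.supportDim_quotSMulTop_succ_eq_supportDim hreg hxm
      rw [← hs] at hdim
      have hnt : Nontrivial (R ⧸ q.1) := Ideal.Quotient.nontrivial_iff.2 q.2.ne_top
      have hntN : Nontrivial N := e.toEquiv.nontrivial
      have hntQ : Nontrivial (QuotSMulTop x N) := nontrivial_quotSMulTop_of_mem_maximalIdeal N hxm
      have hne : Module.supportDim R (QuotSMulTop x N) ≠ ⊥ := Module.supportDim_ne_bot_of_nontrivial R _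
      obtain ⟨r', rfl, hr'⟩ : ∃ r', r = r' + 1 ∧ Module.supportDim R (QuotSMulTop x N) ≤ (r' : WithBot ℕ∞) := by
        cases r with
        | zero =>
          have h0 : Module.supportDim R (QuotSMulTop x N) + 1 ≤ 0 := by exact_mod_cast hdim
          rw [ENat.WithBot.add_one_le_zero_iff] at h0
          exact absurd h0 hne
        | succ r' =>
          refine ⟨r', rfl, ?_⟩
          have h0 : Module.supportDim R (QuotSMulTop x N) + ((1:ℕ) : WithBot ℕ∞) ≤ ((r' : WithBot ℕ∞) + ((1:ℕ) : WithBot ℕ∞)) := by exact_mod_cast hdim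
          exact (ENat.WithBot.add_le_add_natCast_right_iff).1 h0
      have zero := ih r' (by omega) (QuotSMulTop x N) hr' (i+1) (by omega)
      have hS : ((ModuleCat.of R N).smulShortComplex x).ShortExact :=
        IsSMulRegular.smulShortComplex_shortExact hreg
      by_contra ntr
      rw [not_subsingleton_iff_nontrivial] at ntr
      have hj : x ∈ (Module.annihilator R (Abelian.Ext (ModuleCat.of R N) (ModuleCat.of R R) i)).jacobson :=
        (IsLocalRing.maximalIdeal_le_jacobson _) hxm
      refine absurd ?_ (Submodule.top_ne_pointwise_smul_of_mem_jacobson_annihilator hj)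
      rw [eq_comm, eq_top_iff]
      intro y hy
      obtain ⟨z, hz⟩ := Abelian.Ext.contravariant_sequence_exact₁ hS (ModuleCat.of R R) y
        (add_comm 1 i) (zero.elim _ _)
      let z' : Abelian.Ext (ModuleCat.of R N) (ModuleCat.of R R) i := z
      have hz1 : (Abelian.Ext.mk₀ (x • 𝟙 (ModuleCat.of R N))).comp z' (zero_add i) = y := hz
      rw [Abelian.Ext.mk₀_smul, Abelian.Ext.smul_comp, Abelian.Ext.mk₀_id_comp] at hz1
      rw [← hz1]
      exact Submodule.smul_mem_pointwise_smul _ _ ⊤ trivial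

theorem height_add_le (R : Type) [CommRing R] [IsNoetherianRing R] [IsLocalRing R] (p : Ideal R)
    [hp : p.IsPrime] : (p.height : WithBot ℕ∞) + ringKrullDim (R ⧸ p) ≤ ringKrullDim R := by
  let P : PrimeSpectrum R := ⟨p, hp⟩
  have h1 : ringKrullDim (R ⧸ p) = Order.coheight P := by
    rw [ringKrullDim_quotient, Order.coheight_eq_krullDim_Ici]
    rfl
  have h2 : p.height = Order.height P := PrimeSpectrum.height_eq_orderHeight P
  rw [h1, h2, ringKrullDim, Order.krullDim_eq_iSup_height_add_coheight_of_nonempty]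
  norm_cast
  exact le_iSup (fun a : PrimeSpectrum R => Order.height a + Order.coheight a) P

theorem DP_localization (R : Type) [CommRing R] [IsNoetherianRing R] [IsLocalRing R]
    (hCM : IsCMLocalRing R) (p : Ideal R) [hp : p.IsPrime] (n : ℕ)
    (hn : ringKrullDim (Localization.AtPrime p) = n) :
    DP (Localization.AtPrime p) n (Localization.AtPrime p) := by
  obtain ⟨d, hd⟩ := dim_eq_nat R
  have hD : DP R d R := by
    rw [← le_moduleDepth_iff]
    unfold IsCMLocalRing at hCM
    rw [hd] at hCM
    have := hCM.symm.le
    exact_mod_cast this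
  have : Nontrivial (R ⧸ p) := Ideal.Quotient.nontrivial_iff.2 hp.ne_top
  have : IsLocalRing (R ⧸ p) := IsLocalRing.of_surjective' (Ideal.Quotient.mk p) Ideal.Quotient.mk_surjective
  obtain ⟨r, hr⟩ := dim_eq_nat (R ⧸ p)
  have hle := height_add_le R p
  rw [← IsLocalization.AtPrime.ringKrullDim_eq_height p (Localization.AtPrime p), hn, hr, hd] at hle
  have hle : n + r ≤ d := by exact_mod_cast hle
  have hE : ∀ i < n, Subsingleton (Abelian.Ext (ModuleCat.of R (R ⧸ p)) (ModuleCat.of R R) i) := by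
    intro i hi
    refine ischebeck R d hD r _ ?_ i (by omega)
    rw [Module.supportDim_quotient_eq_ringKrullDim, hr]
  have hlt : p • (⊤ : Submodule R R) < ⊤ := by
    simpa [lt_top_iff_ne_top] using hp.ne_top
  obtain ⟨rs, hlen, hmem, hreg⟩ := ModuleCat.exists_isRegular_of_exists_subsingleton_ext p n (ModuleCat.of R R) hlt
    (ModuleCat.of R (R ⧸ p)) (by simp [Module.support_eq_zeroLocus, Ideal.annihilator_quotient]) hE
  have hreg' := hreg.toIsWeaklyRegular.isRegular_of_isLocalization_of_mem (Localization.AtPrime p) p hmem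
  have : IsNoetherianRing (Localization.AtPrime p) :=
      IsLocalization.isNoetherianRing p.primeCompl _ inferInstance
  intro i hi
  refine ModuleCat.subsingleton_ext_of_exists_isRegular (maximalIdeal (Localization.AtPrime p)) (ModuleCat.of _ (ResidueField (Localization.AtPrime p))) ?_ (ModuleCat.of _ (Localization.AtPrime p)) ?_ _ ?_ hreg' i (by simpa [hlen] using hi)
  · rw [Module.support_eq_zeroLocus]
    exact PrimeSpectrum.zeroLocus_anti_mono (by
      have : Module.annihilator (Localization.AtPrime p) (ResidueField (Localization.AtPrime p)) = maximalIdeal _ := Ideal.annihilator_quotient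
      exact this.ge)
  · simp [lt_top_iff_ne_top]
    exact (maximalIdeal.isMaximal _).ne_top
  · intro x hx
    obtain ⟨y, hy, rfl⟩ := List.mem_map.1 hx
    exact (IsLocalization.AtPrime.to_map_mem_maximal_iff _ p y).2 (hmem y hy)

section
open TensorProduct
theorem one_tmul_eq_zero_iff' {R M : Type} [CommRing R] [AddCommGroup M] [Module R M] (I : Ideal R)
    (x : M) : (1 : R ⧸ I) ⊗ₜ[R] x = 0 ↔ x ∈ I • (⊤ : Submodule R M) := by
  rw [← (TensorProduct.quotTensorEquivQuotSMul M I).map_eq_zero_iff,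
    TensorProduct.quotTensorEquivQuotSMul_mk_one_tmul, Submodule.Quotient.mk_eq_zero]

theorem exists_one_tmul' {R M : Type} [CommRing R] [AddCommGroup M] [Module R M] (I : Ideal R)
    (z : (R ⧸ I) ⊗[R] M) : ∃ x : M, z = (1 : R ⧸ I) ⊗ₜ[R] x := by
  obtain ⟨y, rfl⟩ := (TensorProduct.quotTensorEquivQuotSMul M I).symm.surjective z
  obtain ⟨x, rfl⟩ := Submodule.Quotient.mk_surjective _ y
  exact ⟨x, TensorProduct.quotTensorEquivQuotSMul_symm_mk I x⟩

theorem free_of_forall_mem {S A B C : Type} [CommRing S] [IsLocalRing S]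
    [AddCommGroup A] [AddCommGroup B]
    [AddCommGroup C] [Module S A] [Module S B] [Module S C] [Module.Finite S A]
    [Module.Finite S B] [Module.Free S B] (f : A →ₗ[S] B) (g : B →ₗ[S] C)
    (hg : Function.Surjective g) (h : Function.Exact f g)
    (H : ∀ x : A, f x ∈ maximalIdeal S • (⊤ : Submodule S B) → x ∈ maximalIdeal S • (⊤ : Submodule S A)) :
    Module.Free S C := by
  refine Module.free_of_lTensor_residueField_injective f g hg h ?_
  rw [injective_iff_map_eq_zero]
  intro z hz
  obtain ⟨x, rfl⟩ := exists_one_tmul' (maximalIdeal S) z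
  exact (one_tmul_eq_zero_iff' (maximalIdeal S) x).2 (H x ((one_tmul_eq_zero_iff' (maximalIdeal S) _).1 hz))
end

/-- projective dimension at most `n` -/
def PD (S : Type) [CommRing S] (n : ℕ) (M : Type) [AddCommGroup M] [Module S M] : Prop :=
  HasProjectiveDimensionLT (ModuleCat.of S M) (n+1)

section
variable {S : Type} [CommRing S] {A B C : Type} [AddCommGroup A] [AddCommGroup B]
    [AddCommGroup C] [Module S A] [Module S B] [Module S C]

theorem PD.zero_iff : PD S 0 A ↔ Module.Projective S A := by
  unfold PD
  rw [zero_add, ← projective_iff_hasProjectiveDimensionLT_one, IsProjective.iff_projective]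

theorem PD.zero_iff_free [IsLocalRing S] [Module.Finite S A] : PD S 0 A ↔ Module.Free S A := by
  rw [PD.zero_iff]
  exact ⟨fun h => Module.free_of_flat_of_isLocalRing, fun h => inferInstance⟩

theorem PD.mono {n m : ℕ} (h : PD S n A) (hm : n ≤ m) : PD S m A := by
  unfold PD at *
  exact hasProjectiveDimensionLT_of_ge _ _ _ (Nat.succ_le_succ hm)

theorem PD.retract {n : ℕ} (h : PD S n B) (i : A →ₗ[S] B) (r : B →ₗ[S] A) (hr : r ∘ₗ i = LinearMap.id) :
    PD S n A := by
  have : HasProjectiveDimensionLT (ModuleCat.of S B) (n+1) := h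
  exact Retract.hasProjectiveDimensionLT (Y := ModuleCat.of S B) ⟨ModuleCat.ofHom i, ModuleCat.ofHom r, by
    rw [← ModuleCat.ofHom_comp, hr]; rfl⟩ (n+1)

theorem PD.of_equiv {n : ℕ} (h : PD S n B) (e : A ≃ₗ[S] B) : PD S n A :=
  h.retract e.toLinearMap e.symm.toLinearMap (by ext; simp)

theorem PD.succ_iff {n : ℕ} (f : A →ₗ[S] B) (g : B →ₗ[S] C)
    (hf : Function.Injective f) (hg : Function.Surjective g) (h : Function.Exact f g)
    [Module.Projective S B] : PD S (n+1) C ↔ PD S n A := by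
  have hS := shortExact_of f g hf hg h
  exact hS.hasProjectiveDimensionLT_X₃_iff n (IsProjective.iff_projective (R := S) (P := B) |>.1 inferInstance)

theorem PD.mid {n : ℕ} (f : A →ₗ[S] B) (g : B →ₗ[S] C)
    (hf : Function.Injective f) (hg : Function.Surjective g) (h : Function.Exact f g)
    (hA : PD S n A) (hC : PD S n C) : PD S n B :=
  (shortExact_of f g hf hg h).hasProjectiveDimensionLT_X₂ (n+1) hA hC
end

theorem exists_pres (S M : Type) [CommRing S] [AddCommGroup M] [Module S M] [Module.Finite S M] :
    ∃ (n : ℕ) (f : (Fin n → S) →ₗ[S] M), Function.Surjective f := Module.Finite.exists_fin' S M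

/-- depth zero: finite projective dimension implies free. -/
theorem free_of_PD_of_socle (S : Type) [CommRing S] [IsLocalRing S] [IsNoetherianRing S] (s : S)
    (hs0 : s ≠ 0) (hs : ∀ x ∈ maximalIdeal S, s * x = 0) (n : ℕ) :
    ∀ (M : Type) [AddCommGroup M] [Module S M] [Module.Finite S M], PD S n M → Module.Free S M := by
  induction n with
  | zero => intro M _ _ _ h; exact PD.zero_iff_free.1 h
  | succ n ih =>
    intro M _ _ _ h
    obtain ⟨r, f, hf⟩ := exists_pres S M
    have hex : Function.Exact (LinearMap.ker f).subtype f := LinearMap.exact_subtype_ker_map f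
    have h1 := (PD.succ_iff _ f Subtype.val_injective hf hex).1 h
    have hK := ih _ h1
    refine free_of_forall_mem _ f hf hex ?_
    intro x hx
    have hann : ∀ (N : Type) [AddCommGroup N] [Module S N] (y : N),
      y ∈ maximalIdeal S • (⊤ : Submodule S N) → s • y = 0 := by
      intro N _ _ y hy
      refine Submodule.smul_induction_on hy ?_ ?_
      · intro a ha n _; rw [smul_smul, hs a ha, zero_smul]
      · intro a b ha hb; rw [smul_add, ha, hb, add_zero]
    have hsx : s • x = 0 := by
      apply Subtype.val_injective
      exact hann _ _ hx
    have b := Module.finBasis S (LinearMap.ker f)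
    rw [← b.sum_repr x]
    refine Submodule.sum_mem _ fun i _ => Submodule.smul_mem_smul ?_ trivial
    have : s * b.repr x i = 0 := by
      rw [← smul_eq_mul, ← Finsupp.smul_apply, ← map_smul, hsx]; simp
    by_contra hu
    have hu' : IsUnit (b.repr x i) := by simpa using hu
    exact hs0 ((hu'.mul_left_eq_zero).1 this)

/-- change of rings -/
theorem PD.quotSMulTop {S : Type} [CommRing S] [IsNoetherianRing S] (x : S)
    (hx : IsSMulRegular S x) (n : ℕ) : ∀ (M : Type) [AddCommGroup M] [Module S M] [Module.Finite S M],
    IsSMulRegular M x → PD S n M → PD (S ⧸ Ideal.span {x}) n (QuotSMulTop x M) := by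
  induction n with
  | zero =>
    intro M _ _ _ _ h
    have := PD.zero_iff.1 h
    rw [PD.zero_iff]
    exact Module.Projective.of_equiv ((QuotSMulTop.equivQuotTensor x M).extendScalarsOfSurjective
      (S := S ⧸ Ideal.span {x}) Ideal.Quotient.mk_surjective).symm
  | succ n ih =>
    intro M _ _ _ hM h
    obtain ⟨r, f, hf⟩ := exists_pres S M
    have hex : Function.Exact (LinearMap.ker f).subtype f := LinearMap.exact_subtype_ker_map f
    have h1 := (PD.succ_iff _ f Subtype.val_injective hf hex).1 h
    have hF : IsSMulRegular (Fin r → S) x := IsSMulRegular.pi fun _ => hx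
    have hK : IsSMulRegular (LinearMap.ker f) x := hF.of_injective (LinearMap.ker f).subtype Subtype.val_injective
    have h2 := ih _ hK h1
    have hs : Function.Surjective (algebraMap S (S ⧸ Ideal.span {x})) := Ideal.Quotient.mk_surjective
    have ex0 : Function.Exact (0 : Unit →ₗ[S] (LinearMap.ker f)) (LinearMap.ker f).subtype :=
      (LinearMap.exact_zero_iff_injective _ _).2 Subtype.val_injective
    have e1 := QuotSMulTop.map_first_exact_on_four_term_exact_of_isSMulRegular_last ex0 hex hM
    have e2 := QuotSMulTop.map_exact x hex hf
    have s2 := QuotSMulTop.map_surjective x hf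
    refine (PD.succ_iff ((QuotSMulTop.map x (LinearMap.ker f).subtype).extendScalarsOfSurjective hs) ((QuotSMulTop.map x f).extendScalarsOfSurjective hs) ?_ s2 e2).2 h2
    change Function.Injective (QuotSMulTop.map x (LinearMap.ker f).subtype)
    rw [injective_iff_map_eq_zero]
    intro y hy
    obtain ⟨z, rfl⟩ := (e1 y).1 hy
    obtain ⟨w, rfl⟩ := Submodule.Quotient.mk_surjective _ z
    simp

theorem residue_retract (S : Type) [CommRing S] [IsLocalRing S] (x : S)
    (hxm : x ∈ maximalIdeal S) (hx2 : x ∉ maximalIdeal S ^ 2) [IsLocalRing (S ⧸ Ideal.span {x})] :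
    ∃ (i : ResidueField (S ⧸ Ideal.span {x}) →ₗ[S ⧸ Ideal.span {x}] QuotSMulTop x (maximalIdeal S))
      (r : QuotSMulTop x (maximalIdeal S) →ₗ[S ⧸ Ideal.span {x}] ResidueField (S ⧸ Ideal.span {x})),
      r ∘ₗ i = LinearMap.id := by
  have hs : Function.Surjective (algebraMap S (S ⧸ Ideal.span {x})) := Ideal.Quotient.mk_surjective
  -- the equivalence of residue fields
  have hsk : Function.Surjective (Algebra.linearMap S (ResidueField (S ⧸ Ideal.span {x}))) := by
    intro y
    obtain ⟨z, rfl⟩ := IsLocalRing.residue_surjective y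
    obtain ⟨w, rfl⟩ := hs z
    exact ⟨w, rfl⟩
  have hker : LinearMap.ker (Algebra.linearMap S (ResidueField (S ⧸ Ideal.span {x}))) = maximalIdeal S := by
    have hle : LinearMap.ker (Algebra.linearMap S (ResidueField (S ⧸ Ideal.span {x}))) ≤ maximalIdeal S := by
      apply IsLocalRing.le_maximalIdeal
      intro h
      have : (1 : S) ∈ LinearMap.ker (Algebra.linearMap S (ResidueField (S ⧸ Ideal.span {x}))) := by rw [h]; trivial
      simp at this
    have hmax : (RingHom.ker (algebraMap S (ResidueField (S ⧸ Ideal.span {x})))).IsMaximal :=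
      RingHom.ker_isMaximal_of_surjective _ hsk
    exact hmax.eq_of_le (maximalIdeal.isMaximal S).ne_top hle
  let e : ResidueField (S ⧸ Ideal.span {x}) ≃ₗ[S] ResidueField S :=
    ((LinearMap.quotKerEquivOfSurjective _ hsk).symm.trans (Submodule.quotEquivOfEq _ _ hker) :)
  -- the functional
  let X : maximalIdeal S := ⟨x, hxm⟩
  have hX : (maximalIdeal S).toCotangent X ≠ 0 := by
    rwa [Ne, Ideal.toCotangent_eq_zero]
  have hφ : ∃ φ : Module.Dual (ResidueField S) (CotangentSpace S), φ ((maximalIdeal S).toCotangent X) = 1 := by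
    by_contra hcon
    apply hX
    refine (Module.forall_dual_apply_eq_zero_iff (ResidueField S) (V := CotangentSpace S) _).1 fun φ => ?_
    by_contra h0
    apply hcon
    refine ⟨(φ ((maximalIdeal S).toCotangent X))⁻¹ • φ, ?_⟩
    simp [h0]
  obtain ⟨φ, hφ⟩ := hφ
  let r1 : maximalIdeal S →ₗ[S] ResidueField S := (φ.restrictScalars S) ∘ₗ (maximalIdeal S).toCotangent
  have hmk : ∀ y ∈ maximalIdeal S, ∀ z : ResidueField S, y • z = 0 := by
    intro y hy z
    rw [Algebra.smul_def]
    have : algebraMap S (ResidueField S) y = 0 := (IsLocalRing.residue_eq_zero_iff y).2 hy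
    rw [this, zero_mul]
  let r0 : QuotSMulTop x (maximalIdeal S) →ₗ[S] ResidueField S := Submodule.liftQ _ r1 (by
    intro y hy
    obtain ⟨z, _, rfl⟩ := (Submodule.mem_smul_pointwise_iff_exists _ _ _).1 hy
    rw [LinearMap.mem_ker, map_smul]
    exact hmk x hxm _)
  let i0 : ResidueField S →ₗ[S] QuotSMulTop x (maximalIdeal S) :=
    Submodule.liftQ (maximalIdeal S) (LinearMap.toSpanSingleton S _ (Submodule.Quotient.mk X)) (by
      intro y hy
      rw [LinearMap.mem_ker, LinearMap.toSpanSingleton_apply, ← Submodule.Quotient.mk_smul,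
        Submodule.Quotient.mk_eq_zero]
      refine (Submodule.mem_smul_pointwise_iff_exists _ _ _).2 ⟨⟨y, hy⟩, trivial, ?_⟩
      ext
      simp [X, mul_comm])
  have hri : r0 ∘ₗ i0 = LinearMap.id := by
    apply Submodule.linearMap_qext
    ext
    change r0 (i0 (Submodule.Quotient.mk 1)) = Submodule.Quotient.mk 1
    have h1 : i0 (Submodule.Quotient.mk 1) = Submodule.Quotient.mk X := by
      change (1:S) • (Submodule.Quotient.mk X : QuotSMulTop x (maximalIdeal S)) = _
      rw [one_smul]
    rw [h1]
    change φ ((maximalIdeal S).toCotangent X) = _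
    rw [hφ]; rfl
  refine ⟨(i0 ∘ₗ e.toLinearMap).extendScalarsOfSurjective hs,
    (e.symm.toLinearMap ∘ₗ r0).extendScalarsOfSurjective hs, ?_⟩
  ext z
  change e.symm (r0 (i0 (e z))) = z
  have := LinearMap.congr_fun hri (e z)
  rw [LinearMap.comp_apply] at this
  rw [this]; simp

theorem serre_aux (n : ℕ) : ∀ (S : Type) [CommRing S] [IsLocalRing S] [IsNoetherianRing S] (t : ℕ),
    ringKrullDim S = n → PD S t (ResidueField S) →
    ∃ s : Finset S, Ideal.span (s : Set S) = maximalIdeal S ∧ s.card ≤ n := by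
  classical
  induction n using Nat.strong_induction_on with
  | _ n ih =>
  intro S _ _ _ t hdim hpd
  by_cases hdis : Disjoint (maximalIdeal S : Set S) (nonZeroDivisors S : Set S)
  · have hlt := Ideal.bot_lt_annihilator_of_disjoint_nonZeroDivisors hdis
    obtain ⟨s, hs, hs0⟩ := SetLike.exists_of_lt hlt
    have hs' : ∀ x ∈ maximalIdeal S, s * x = 0 := by
      intro x hx
      have := Module.mem_annihilator.1 hs ⟨x, hx⟩
      exact congrArg Subtype.val this
    have hfree := free_of_PD_of_socle S s hs0 hs' t _ hpd
    refine ⟨∅, ?_, by simp⟩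
    have h1 : Module.annihilator S (ResidueField S) = ⊥ := Module.annihilator_eq_bot.2 inferInstance
    have h2 : Module.annihilator S (ResidueField S) = maximalIdeal S := Ideal.annihilator_quotient
    simp [← h2, h1]
  · obtain ⟨y, hym, hynzd⟩ := Set.not_disjoint_iff.1 hdis
    have hy0 : y ≠ 0 := nonZeroDivisors.ne_zero hynzd
    obtain ⟨x, hxm, hx2, hxnzd⟩ : ∃ x ∈ maximalIdeal S, x ∉ maximalIdeal S ^ 2 ∧ x ∈ nonZeroDivisors S := by
      by_contra! hcon
      have hsub : (maximalIdeal S : Set S) ⊆ ⋃ i ∈ insert (maximalIdeal S ^ 2) (associatedPrimes S S), ((id i : Ideal S) : Set S) := by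
        intro x hx
        rw [Set.biUnion_insert]
        by_cases hx2 : x ∈ maximalIdeal S ^ 2
        · exact Or.inl hx2
        · right
          have := hcon x hx hx2
          simp only [id]
          rw [biUnion_associatedPrimes_eq_compl_nonZeroDivisors]
          exact this
      obtain ⟨P, hP, hle⟩ := (Ideal.subset_union_prime_finite ((associatedPrimes.finite S S).insert _) (maximalIdeal S ^ 2)
        (maximalIdeal S ^ 2) (fun i hi h _ => by
          rcases hi with rfl | hi
          · exact absurd rfl h
          · exact IsAssociatedPrime.isPrime hi)).1 hsub
      rcases hP with rfl | hP
      · have hb : maximalIdeal S = ⊥ := by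
          refine Submodule.eq_bot_of_le_smul_of_le_jacobson_bot (maximalIdeal S) _ (IsNoetherian.noetherian _) ?_ ?_
          · simpa [pow_two] using hle
          · rw [IsLocalRing.jacobson_eq_maximalIdeal _ bot_ne_top]
        rw [hb] at hym
        exact hy0 hym
      · have h1 : y ∈ ⋃ p ∈ associatedPrimes S S, (p : Set S) := Set.mem_biUnion hP (hle hym)
        rw [biUnion_associatedPrimes_eq_compl_nonZeroDivisors] at h1
        exact h1 hynzd
    have hreg : IsSMulRegular S x := by
      intro a b hab
      have : x * (a - b) = 0 := by
        rw [mul_sub]; exact sub_eq_zero.2 hab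
      exact sub_eq_zero.1 ((mul_left_mem_nonZeroDivisors_eq_zero_iff hxnzd).1 this)
    have hnt : Nontrivial (S ⧸ Ideal.span {x}) := by
      rw [Ideal.Quotient.nontrivial_iff]
      exact fun h => (maximalIdeal.isMaximal S).ne_top (top_le_iff.1 (h ▸ (Ideal.span_singleton_le_iff_mem _).2 hxm))
    have hmks : Function.Surjective (Ideal.Quotient.mk (Ideal.span {x})) := Ideal.Quotient.mk_surjective
    have hloc : IsLocalRing (S ⧸ Ideal.span {x}) := IsLocalRing.of_surjective' _ hmks
    obtain ⟨n', hn'⟩ := dim_eq_nat (S ⧸ Ideal.span {x})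
    have hd := ringKrullDim_quotient_span_singleton_succ_eq_ringKrullDim hreg hxm
    rw [hn', hdim] at hd
    have hd' : n' + 1 = n := by exact_mod_cast hd
    -- projective dimension of the maximal ideal
    have hpdm : PD S t (maximalIdeal S) := by
      refine (PD.succ_iff (maximalIdeal S).subtype (Submodule.mkQ (maximalIdeal S)) Subtype.val_injective
        (Submodule.mkQ_surjective _) (LinearMap.exact_subtype_mkQ _)).1 ?_
      exact PD.mono hpd (Nat.le_succ t)
    have hregm : IsSMulRegular (maximalIdeal S) x :=
      hreg.of_injective (maximalIdeal S).subtype Subtype.val_injective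
    have hpdq := PD.quotSMulTop x hreg t (maximalIdeal S) hregm hpdm
    obtain ⟨i, r, hri⟩ := residue_retract S x hxm hx2
    obtain ⟨s', hs', hcard⟩ := ih n' (by omega) (S ⧸ Ideal.span {x}) t hn' (hpdq.retract i r hri)
    choose g hg using hmks
    have hmax : Ideal.comap (Ideal.Quotient.mk (Ideal.span {x})) (maximalIdeal (S ⧸ Ideal.span {x})) = maximalIdeal S :=
      ((IsLocalRing.local_hom_TFAE (Ideal.Quotient.mk (Ideal.span {x}))).out 0 4).1
        (IsLocalHom.of_surjective _ Ideal.Quotient.mk_surjective)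
    have hmap : Ideal.map (Ideal.Quotient.mk (Ideal.span {x})) (Ideal.span (g '' (s' : Set _))) = maximalIdeal (S ⧸ Ideal.span {x}) := by
      rw [Ideal.map_span, ← hs', ← Set.image_comp]
      congr 1
      ext z; simp [hg]
    refine ⟨insert x (s'.image g), ?_, ?_⟩
    · rw [Finset.coe_insert, Finset.coe_image, Ideal.span_insert, ← hmax, ← hmap,
        Ideal.comap_map_of_surjective _ Ideal.Quotient.mk_surjective, ← RingHom.ker_eq_comap_bot, Ideal.mk_ker, sup_comm]
    · calc _ ≤ (s'.image g).card + 1 := Finset.card_insert_le _ _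
        _ ≤ s'.card + 1 := by gcongr; exact Finset.card_image_le
        _ ≤ n := by omega

theorem serre (S : Type) [CommRing S] [IsLocalRing S] [hN : IsNoetherianRing S] (t : ℕ)
    (h : PD S t (ResidueField S)) : IsRegularLocal S := by
  obtain ⟨n, hn⟩ := dim_eq_nat S
  obtain ⟨s, hs, hc⟩ := serre_aux n S t hn h
  refine ⟨hN, s, hs, ?_⟩
  have h1 := ringKrullDim_le_spanFinrank_maximalIdeal S
  have h2 := Submodule.spanFinrank_span_le_ncard_of_finite (R := S) s.finite_toSet
  have h3 : Submodule.span S (s : Set S) = maximalIdeal S := hs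
  rw [h3, Set.ncard_coe_finset] at h2
  rw [hn] at h1 ⊢
  have h1' : n ≤ Submodule.spanFinrank (maximalIdeal S) := by exact_mod_cast h1
  have : s.card = n := by omega
  rw [this]

/-- multiplication by `a` on `X` factors through a finite free module -/
def Fac {R : Type} [CommRing R] (a : R) (X : Type) [AddCommGroup X] [Module R X] : Prop :=
  ∃ (r : ℕ) (α : X →ₗ[R] (Fin r → R)) (β : (Fin r → R) →ₗ[R] X), ∀ x, β (α x) = a • x

section
variable {R : Type} [CommRing R] {A B X : Type} [AddCommGroup A] [Module R A] [AddCommGroup B]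
  [Module R B] [AddCommGroup X] [Module R X]

theorem Fac.mul {a : R} (h : Fac a X) (b : R) : Fac (b * a) X := by
  obtain ⟨r, α, β, h⟩ := h
  exact ⟨r, α, b • β, fun x => by simp [h, mul_smul]⟩

theorem Fac.of_equiv {a : R} (h : Fac a A) (e : X ≃ₗ[R] A) : Fac a X := by
  obtain ⟨r, α, β, h⟩ := h
  exact ⟨r, α ∘ₗ e.toLinearMap, e.symm.toLinearMap ∘ₗ β, fun x => by simp [h]⟩

theorem Fac.prod {a : R} (hA : Fac a A) (hB : Fac a B) : Fac a (A × B) := by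
  obtain ⟨r, α, β, h⟩ := hA
  obtain ⟨s, α', β', h'⟩ := hB
  let e : ((Fin r → R) × (Fin s → R)) ≃ₗ[R] (Fin (r + s) → R) :=
    (LinearEquiv.sumArrowLequivProdArrow (Fin r) (Fin s) R R).symm.trans
      (LinearEquiv.funCongrLeft R R finSumFinEquiv.symm)
  refine ⟨r + s, e.toLinearMap ∘ₗ (α.prodMap α'), (β.prodMap β') ∘ₗ e.symm.toLinearMap, ?_⟩
  rintro ⟨x, y⟩
  simp [h, h']

theorem Fac.of_subsingleton [Subsingleton X] (a : R) : Fac a X :=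
  ⟨0, 0, 0, fun _ => Subsingleton.elim _ _⟩

theorem exists_fac [IsNoetherianRing R] [Module.Finite R X] (p : Ideal R) [p.IsPrime]
    (h : Module.Free (Localization.AtPrime p) (LocalizedModule p.primeCompl X)) :
    ∃ a ∉ p, Fac a X := by
  obtain ⟨n, f, hf⟩ := exists_pres R X
  have : Module.FinitePresentation R X := Module.finitePresentation_of_finite R X
  obtain ⟨σ, hσ⟩ := Module.projective_lifting_property (R := Localization.AtPrime p) (LocalizedModule.map p.primeCompl f) LinearMap.id
    (LocalizedModule.map_surjective p.primeCompl f hf)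
  let mF := LocalizedModule.mkLinearMap p.primeCompl (Fin n → R)
  let mX := LocalizedModule.mkLinearMap p.primeCompl X
  obtain ⟨α, s, hs⟩ := Module.FinitePresentation.exists_lift_of_isLocalizedModule p.primeCompl mF
    ((σ.restrictScalars R) ∘ₗ mX)
  have key : mX ∘ₗ (f ∘ₗ α) = mX ∘ₗ (s.1 • LinearMap.id) := by
    ext x
    have h1 : mF (α x) = s • σ (mX x) := LinearMap.congr_fun hs x
    have h2 : LocalizedModule.map p.primeCompl f (mF (α x)) = mX (f (α x)) := by
      simp [mF, mX, LocalizedModule.mkLinearMap_apply]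
    have h3 : LocalizedModule.map p.primeCompl f (σ (mX x)) = mX x := LinearMap.congr_fun hσ (mX x)
    simp only [LinearMap.comp_apply, LinearMap.smul_apply, LinearMap.id_apply, map_smul]
    rw [← h2, h1]
    have h4 : LocalizedModule.map p.primeCompl f (s.1 • σ (mX x)) = s.1 • LocalizedModule.map p.primeCompl f (σ (mX x)) :=
      ((LocalizedModule.map p.primeCompl f).restrictScalars R).map_smul _ _
    rw [← h3, ← h4, h3]; rfl
  obtain ⟨t, ht⟩ := Module.Finite.exists_smul_of_comp_eq_of_isLocalizedModule p.primeCompl mX _ _ key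
  refine ⟨t.1 * s.1, (t * s).2, n, t.1 • α, f, fun x => ?_⟩
  have := LinearMap.congr_fun ht x
  simp only [LinearMap.smul_apply, LinearMap.comp_apply, LinearMap.id_apply] at this
  rw [LinearMap.smul_apply, map_smul, mul_smul]
  exact this
end

theorem MemCM0.retract {R : Type} [CommRing R] [IsNoetherianRing R] [IsLocalRing R] {A X : Type}
    [AddCommGroup A] [Module R A] [AddCommGroup X] [Module R X] (h : MemCM0 R (ModuleCat.of R X))
    (i : A →ₗ[R] X) (r : X →ₗ[R] A) (hr : r ∘ₗ i = LinearMap.id) : MemCM0 R (ModuleCat.of R A) := by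
  obtain ⟨h1, h2, h3⟩ := h
  have h1 : Module.Finite R X := h1
  have hri : ∀ (p : Ideal R) [p.IsPrime], (LocalizedModule.map p.primeCompl r) ∘ₗ (LocalizedModule.map p.primeCompl i) = LinearMap.id := by
    intro p _
    ext x
    induction x using LocalizedModule.induction_on with
    | h m s =>
      have := LinearMap.congr_fun hr m
      simp only [LinearMap.comp_apply, LinearMap.id_apply] at this
      simp [LocalizedModule.map_mk, this]
  have hfin : Module.Finite R A := Module.Finite.of_surjective r
    (fun x => ⟨i x, LinearMap.congr_fun hr x⟩)
  refine ⟨hfin, ?_, ?_⟩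
  · rw [isMCM_iff] at h2 ⊢
    intro p _ n hn
    exact (h2 p n hn).retract _ _ (hri p)
  · intro p _ hp
    have := h3 p hp
    change Module.Free (Localization.AtPrime p) (LocalizedModule p.primeCompl A)
    have : Module.Free (Localization.AtPrime p) (LocalizedModule p.primeCompl X) := h3 p hp
    have : Module.Projective (Localization.AtPrime p) (LocalizedModule p.primeCompl A) :=
      Module.Projective.of_split _ _ (hri p)
    exact Module.free_of_flat_of_isLocalRing

open TensorProduct in
theorem fac_of_indec {R : Type} [CommRing R] [IsNoetherianRing R] [IsLocalRing R] (a : R)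
    (H : ∀ M : ModuleCat.{0} R, MemCM0 R M → IndecomposableModule R M → Fac a M) (n : ℕ) :
    ∀ (X : Type) [AddCommGroup X] [Module R X], MemCM0 R (ModuleCat.of R X) →
      Module.finrank (ResidueField R) (ResidueField R ⊗[R] X) = n → Fac a X := by
  induction n using Nat.strong_induction_on with
  | _ n ih =>
  intro X _ _ hX hn
  by_cases hs : Subsingleton X
  · exact Fac.of_subsingleton a
  by_cases hi : IndecomposableModule R X
  · exact H (ModuleCat.of R X) hX hi
  unfold IndecomposableModule at hi
  rw [not_subsingleton_iff_nontrivial] at hs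
  push Not at hi
  obtain ⟨A, B, iA, mA, iB, mB, ⟨e⟩, hA, hB⟩ := hi hs
  have hXf : Module.Finite R X := hX.1
  have cA : MemCM0 R (ModuleCat.of R A) := hX.retract (e.symm.toLinearMap ∘ₗ LinearMap.inl R A B)
    (LinearMap.fst R A B ∘ₗ e.toLinearMap) (by ext; simp)
  have cB : MemCM0 R (ModuleCat.of R B) := hX.retract (e.symm.toLinearMap ∘ₗ LinearMap.inr R A B)
    (LinearMap.snd R A B ∘ₗ e.toLinearMap) (by ext; simp)
  have fA : Module.Finite R A := cA.1
  have fB : Module.Finite R B := cB.1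
  have hsum : Module.finrank (ResidueField R) (ResidueField R ⊗[R] X) =
      Module.finrank (ResidueField R) (ResidueField R ⊗[R] A) + Module.finrank (ResidueField R) (ResidueField R ⊗[R] B) := by
    rw [← Module.finrank_prod]
    exact LinearEquiv.finrank_eq ((e.baseChange R (ResidueField R) _ _).trans (TensorProduct.prodRight R (ResidueField R) (ResidueField R) A B))
  have pos : ∀ (A : Type) [AddCommGroup A] [Module R A] [Module.Finite R A], ¬ Subsingleton A →
      0 < Module.finrank (ResidueField R) (ResidueField R ⊗[R] A) := by
    intro A _ _ _ h
    have : Nontrivial (ResidueField R ⊗[R] A) := by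
      rw [← not_subsingleton_iff_nontrivial, IsLocalRing.subsingleton_tensorProduct]
      exact h
    exact Module.finrank_pos
  have pA := pos A (not_subsingleton_iff_nontrivial.2 hA)
  have pB := pos B (not_subsingleton_iff_nontrivial.2 hB)
  exact ((ih _ (by omega) A cA rfl).prod (ih _ (by omega) B cB rfl)).of_equiv e

theorem exists_uniform_fac {R : Type} [CommRing R] [IsNoetherianRing R] [IsLocalRing R]
    (hfin : ∃ (n : ℕ) (f : Fin n → ModuleCat.{0} R),
      ∀ M : ModuleCat.{0} R, MemCM0 R M → IndecomposableModule R M →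
        ∃ i : Fin n, Nonempty ((M : Type) ≃ₗ[R] (f i : Type)))
    (p : Ideal R) [hp : p.IsPrime] (hpm : p ≠ maximalIdeal R) :
    ∃ a ∉ p, ∀ (X : Type) [AddCommGroup X] [Module R X], MemCM0 R (ModuleCat.of R X) → Fac a X := by
  obtain ⟨n, f, hf⟩ := hfin
  have h1 : ∀ i : Fin n, ∃ a ∉ p, ∀ M : ModuleCat.{0} R, MemCM0 R M → Nonempty ((M : Type) ≃ₗ[R] (f i : Type)) → Fac a M := by
    intro i
    by_cases h : ∃ M : ModuleCat.{0} R, MemCM0 R M ∧ Nonempty ((M : Type) ≃ₗ[R] (f i : Type))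
    · obtain ⟨M, hM, ⟨e⟩⟩ := h
      have : Module.Finite R M := hM.1
      obtain ⟨a, ha, hfac⟩ := exists_fac p (hM.2.2 p hpm)
      exact ⟨a, ha, fun M' _ ⟨e'⟩ => hfac.of_equiv (e'.trans e.symm)⟩
    · exact ⟨1, hp.one_notMem, fun M hM e => absurd ⟨M, hM, e⟩ h⟩
  choose a ha hfac using h1
  refine ⟨∏ i, a i, ?_, fun X _ _ hX => fac_of_indec _ (fun M hM hi => ?_) _ X hX rfl⟩
  · intro hmem
    obtain ⟨i, _, hi⟩ := hp.prod_mem_iff.1 hmem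
    exact ha i hi
  · obtain ⟨i, e⟩ := hf M hM hi
    have := (hfac i M hM e).mul (∏ j ∈ Finset.univ.erase i, a j)
    rwa [Finset.prod_erase_mul _ _ (Finset.mem_univ i)] at this

open TensorProduct in
/-- `a` kills `Tor_{t+1}(X, N)`, phrased with finite free presentations -/
def TK {R : Type} [CommRing R] (a : R) (X : Type) [AddCommGroup X] [Module R X] :
    ℕ → ∀ (N : Type) [AddCommGroup N] [Module R N], Prop
  | 0, N, _, _ => ∀ (n : ℕ) (g : (Fin n → R) →ₗ[R] N), Function.Surjective g →
      ∀ z : X ⊗[R] (LinearMap.ker g), (LinearMap.ker g).subtype.lTensor X z = 0 → a • z = 0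
  | t+1, N, _, _ => ∀ (n : ℕ) (g : (Fin n → R) →ₗ[R] N), Function.Surjective g →
      TK a X t (LinearMap.ker g)

section
open TensorProduct
variable {R : Type} [CommRing R]

theorem tensor_comm {A B C D : Type} [AddCommGroup A] [Module R A] [AddCommGroup B] [Module R B]
    [AddCommGroup C] [Module R C] [AddCommGroup D] [Module R D] (f : A →ₗ[R] B) (g : C →ₗ[R] D)
    (z : A ⊗[R] C) : f.rTensor D (g.lTensor A z) = g.lTensor B (f.rTensor C z) := by
  rw [← LinearMap.comp_apply, ← LinearMap.comp_apply, LinearMap.rTensor_comp_lTensor, LinearMap.lTensor_comp_rTensor]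

theorem TK.of_fac {a : R} {X : Type} [AddCommGroup X] [Module R X] (h : Fac a X)
    (N : Type) [AddCommGroup N] [Module R N] : TK a X 0 N := by
  obtain ⟨r, α, β, h⟩ := h
  intro n g hg z hz
  have h1 : α.rTensor (LinearMap.ker g) z = 0 := by
    have hinj : Function.Injective ((LinearMap.ker g).subtype.lTensor (Fin r → R)) :=
      Module.Flat.lTensor_preserves_injective_linearMap _ Subtype.val_injective
    apply hinj
    rw [← tensor_comm, hz]; simp
  have h2 : a • z = β.rTensor (LinearMap.ker g) (α.rTensor (LinearMap.ker g) z) := by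
    rw [← LinearMap.comp_apply, ← LinearMap.rTensor_comp]
    have : β ∘ₗ α = a • LinearMap.id := by ext x; simp [h]
    rw [this, LinearMap.rTensor_smul]; simp
  rw [h2, h1, map_zero]

theorem TK.shift {a : R} {X : Type} [AddCommGroup X] [Module R X] {m : ℕ} (q : (Fin m → R) →ₗ[R] X)
    (hq : Function.Surjective q) (t : ℕ) : ∀ (N : Type) [AddCommGroup N] [Module R N],
    TK a (LinearMap.ker q) t N → TK a X (t+1) N := by
  induction t with
  | succ t ih =>
    intro N _ _ h n g hg
    exact ih _ (h n g hg)
  | zero =>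
    intro N _ _ h n g hg k p hp z hz
    let i := (LinearMap.ker q).subtype
    let j := (LinearMap.ker p).subtype
    have hi : Function.Injective i := Subtype.val_injective
    have hiq : Function.Exact i q := LinearMap.exact_subtype_ker_map q
    have hjp : Function.Exact j p := LinearMap.exact_subtype_ker_map p
    obtain ⟨w, rfl⟩ := LinearMap.rTensor_surjective (LinearMap.ker p) hq z
    -- w' in P ⊗ G
    have h1 : q.rTensor (Fin k → R) (j.lTensor _ w) = 0 := by rw [tensor_comm]; exact hz
    obtain ⟨u, hu⟩ := (rTensor_exact (Fin k → R) hiq hq _).1 h1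
    have h2 : i.rTensor (LinearMap.ker g) (p.lTensor _ u) = 0 := by
      rw [tensor_comm, hu, ← LinearMap.comp_apply, ← LinearMap.lTensor_comp, hjp.linearMap_comp_eq_zero]
      simp
    have h3 : (LinearMap.ker g).subtype.lTensor (LinearMap.ker q) (p.lTensor _ u) = 0 := by
      have hinj : Function.Injective (i.rTensor (Fin n → R)) :=
        Module.Flat.rTensor_preserves_injective_linearMap _ hi
      apply hinj
      rw [tensor_comm, h2]; simp
    have h4 := h n g hg _ h3
    rw [← map_smul] at h4
    obtain ⟨y, hy⟩ := (lTensor_exact (LinearMap.ker q) hjp hp _).1 h4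
    have h5 : i.rTensor _ y = a • w := by
      have hinj : Function.Injective (j.lTensor (Fin m → R)) :=
        Module.Flat.lTensor_preserves_injective_linearMap _ Subtype.val_injective
      apply hinj
      rw [← tensor_comm, hy, map_smul, hu, map_smul]
    rw [← map_smul, ← h5, ← LinearMap.comp_apply, ← LinearMap.rTensor_comp, hiq.linearMap_comp_eq_zero]
    simp

end

/-- depth conditions for syzygies -/
def Good (R : Type) [CommRing R] [IsLocalRing R] (s : ℕ) (X : Type) [AddCommGroup X] [Module R X] : Prop :=
  Module.Finite R X ∧ (∀ (p : Ideal R) [p.IsPrime], p ≠ maximalIdeal R →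
      Module.Free (Localization.AtPrime p) (LocalizedModule p.primeCompl X)) ∧
   ∀ (p : Ideal R) [p.IsPrime] (n : ℕ), ringKrullDim (Localization.AtPrime p) = n →
     DP (Localization.AtPrime p) (min n s) (LocalizedModule p.primeCompl X)

theorem Good.syz {R : Type} [CommRing R] [IsNoetherianRing R] [IsLocalRing R] (hCM : IsCMLocalRing R)
    {s : ℕ} {X : Type} [AddCommGroup X] [Module R X] (h : Good R s X) {m : ℕ}
    (q : (Fin m → R) →ₗ[R] X) (hq : Function.Surjective q) : Good R (s+1) (LinearMap.ker q) := by
  obtain ⟨h1, h2, h3⟩ := h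
  have hex : Function.Exact (LinearMap.ker q).subtype q := LinearMap.exact_subtype_ker_map q
  have hexp := fun (p : Ideal R) [p.IsPrime] => LocalizedModule.map_exact p.primeCompl _ _ hex
  have hinj := fun (p : Ideal R) [p.IsPrime] => LocalizedModule.map_injective p.primeCompl (LinearMap.ker q).subtype Subtype.val_injective
  have hsur := fun (p : Ideal R) [p.IsPrime] => LocalizedModule.map_surjective p.primeCompl q hq
  have hfr : ∀ (p : Ideal R) [p.IsPrime], Module.Free (Localization.AtPrime p) (LocalizedModule p.primeCompl (Fin m → R)) :=
    fun p _ => Module.free_of_isLocalizedModule p.primeCompl (LocalizedModule.mkLinearMap p.primeCompl (Fin m → R))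
  refine ⟨inferInstance, ?_, ?_⟩
  · intro p _ hp
    have := h2 p hp
    have hfp := hfr p
    have : PD (Localization.AtPrime p) 0 (LocalizedModule p.primeCompl X) := PD.zero_iff_free.2 this
    rw [← PD.zero_iff_free]
    exact (PD.succ_iff _ _ (hinj p) (hsur p) (hexp p)).1 (this.mono (Nat.zero_le 1))
  · intro p _ n hn
    cases n with
    | zero => intro i hi; simp at hi
    | succ n =>
      rw [Nat.add_min_add_right]
      have hfp := hfr p
      have hP : DP (Localization.AtPrime p) (n+1) (LocalizedModule p.primeCompl (Fin m → R)) :=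
        DP.free (DP_localization R hCM p _ hn)
      exact DP.left _ _ (hinj p) (hsur p) (hexp p) (hP.mono (by omega)) ((h3 p _ hn).mono (by omega))

theorem exists_syz_X {R : Type} [CommRing R] [IsNoetherianRing R] [IsLocalRing R] (hCM : IsCMLocalRing R)
    (d : ℕ) : ∀ (s : ℕ) (X : Type) [AddCommGroup X] [Module R X], Good R s X →
    ∃ (Y : Type) (_ : AddCommGroup Y) (_ : Module R Y), Good R (s + d) Y ∧
      ∀ (a : R) (t : ℕ) (N : Type) [AddCommGroup N] [Module R N], TK a Y t N → TK a X (t + d) N := by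
  induction d with
  | zero => intro s X _ _ h; exact ⟨X, _, _, h, fun a t N _ _ h => h⟩
  | succ d ih =>
    intro s X _ _ h
    have := h.1
    obtain ⟨m, q, hq⟩ := exists_pres R X
    obtain ⟨Y, _, _, hY, H⟩ := ih (s+1) _ (h.syz hCM q hq)
    refine ⟨Y, _, _, by rwa [show s + (d+1) = s + 1 + d by omega], fun a t N _ _ h => ?_⟩
    exact TK.shift q hq _ N (H a t N h)

theorem exists_syz_N {R : Type} [CommRing R] [IsNoetherianRing R] (d : ℕ) :
    ∀ (N : Type) [AddCommGroup N] [Module R N] [Module.Finite R N],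
    ∃ (K : Type) (_ : AddCommGroup K) (_ : Module R K), Module.Finite R K ∧
      (∀ (a : R) (X : Type) [AddCommGroup X] [Module R X], TK a X d N → TK a X 0 K) ∧
      ∀ (p : Ideal R) [p.IsPrime] (t : ℕ), PD (Localization.AtPrime p) t (LocalizedModule p.primeCompl K) →
        PD (Localization.AtPrime p) (t + d) (LocalizedModule p.primeCompl N) := by
  induction d with
  | zero => intro N _ _ _; exact ⟨N, _, _, inferInstance, fun a X _ _ h => h, fun p _ t h => h⟩
  | succ d ih =>
    intro N _ _ _
    obtain ⟨m, q, hq⟩ := exists_pres R N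
    obtain ⟨K, _, _, hK, H1, H2⟩ := ih (LinearMap.ker q)
    refine ⟨K, _, _, hK, fun a X _ _ h => H1 a X (h m q hq), fun p _ t h => ?_⟩
    have hex : Function.Exact (LinearMap.ker q).subtype q := LinearMap.exact_subtype_ker_map q
    have hfr : Module.Free (Localization.AtPrime p) (LocalizedModule p.primeCompl (Fin m → R)) :=
      Module.free_of_isLocalizedModule p.primeCompl (LocalizedModule.mkLinearMap p.primeCompl (Fin m → R))
    exact (PD.succ_iff _ _ (LocalizedModule.map_injective p.primeCompl (LinearMap.ker q).subtype Subtype.val_injective)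
      (LocalizedModule.map_surjective p.primeCompl q hq) (LocalizedModule.map_exact p.primeCompl _ _ hex)).2 (H2 p t h)

theorem good_quot {R : Type} [CommRing R] [IsNoetherianRing R] [IsLocalRing R] (p : Ideal R) (i : ℕ) :
    Good R 0 (R ⧸ (p ⊔ maximalIdeal R ^ i)) := by
  refine ⟨inferInstance, ?_, ?_⟩
  · intro q hq hqm
    have hle : ¬ maximalIdeal R ≤ q := fun h =>
      hqm (le_antisymm (le_maximalIdeal hq.ne_top) h)
    obtain ⟨y, hy, hyq⟩ := SetLike.not_le_iff_exists.1 hle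
    have hs : Subsingleton (LocalizedModule q.primeCompl (R ⧸ (p ⊔ maximalIdeal R ^ i))) := by
      rw [LocalizedModule.subsingleton_iff]
      intro m
      refine ⟨y ^ i, fun h => hyq (hq.mem_of_pow_mem _ h), ?_⟩
      obtain ⟨r, rfl⟩ := Ideal.Quotient.mk_surjective m
      rw [← Ideal.Quotient.mk_eq_mk, ← Submodule.Quotient.mk_smul, Submodule.Quotient.mk_eq_zero]
      exact Ideal.mul_mem_right _ _ (Ideal.mem_sup_right (Ideal.pow_mem_pow hy i))
    exact Module.Free.of_subsingleton _ _
  · intro q _ n _ j hj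
    simp at hj

theorem good_memCM0 {R : Type} [CommRing R] [IsNoetherianRing R] [IsLocalRing R] {d : ℕ}
    (hd : ringKrullDim R = d) (Y : Type) [AddCommGroup Y] [Module R Y] (h : Good R d Y) :
    MemCM0 R (ModuleCat.of R Y) := by
  refine ⟨h.1, ?_, h.2.1⟩
  change IsMCMModule R Y
  rw [isMCM_iff]
  intro q hq n hn
  have h1 := Ideal.height_le_ringKrullDim_of_ne_top (I := q) hq.ne_top
  rw [← IsLocalization.AtPrime.ringKrullDim_eq_height q (Localization.AtPrime q), hn, hd] at h1
  have h1 : n ≤ d := by exact_mod_cast h1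
  have := h.2.2 q n hn
  rwa [min_eq_left h1] at this

theorem mem_of_forall_sup {R M : Type} [CommRing R] [IsNoetherianRing R] [IsLocalRing R]
    [AddCommGroup M] [Module R M] [Module.Finite R M] (p : Ideal R) (x : M)
    (h : ∀ i : ℕ, x ∈ (p ⊔ maximalIdeal R ^ i) • (⊤ : Submodule R M)) : x ∈ p • (⊤ : Submodule R M) := by
  rw [← Submodule.Quotient.mk_eq_zero, ← Submodule.mem_bot R,
    ← Ideal.iInf_pow_smul_eq_bot_of_isLocalRing (M := M ⧸ p • (⊤ : Submodule R M)) (maximalIdeal R)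
      (maximalIdeal.isMaximal R).ne_top, Submodule.mem_iInf]
  intro i
  have h1 := Submodule.mem_map_of_mem (f := (p • (⊤ : Submodule R M)).mkQ) (h i)
  rw [Submodule.sup_smul, Submodule.map_sup, Submodule.mkQ_map_self, bot_sup_eq,
    Submodule.map_smul''] at h1
  exact Submodule.smul_mono le_rfl le_top h1

theorem key_mem {R : Type} [CommRing R] [IsNoetherianRing R] [IsLocalRing R]
    {p : Ideal R} {a : R} {K : Type} [AddCommGroup K] [Module R K]
    (hK : ∀ i : ℕ, TK a (R ⧸ (p ⊔ maximalIdeal R ^ i)) 0 K) {n : ℕ} (g : (Fin n → R) →ₗ[R] K)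
    (hg : Function.Surjective g) (x : LinearMap.ker g)
    (hx : (x : Fin n → R) ∈ p • (⊤ : Submodule R (Fin n → R))) :
    a • x ∈ p • (⊤ : Submodule R (LinearMap.ker g)) := by
  refine mem_of_forall_sup p _ fun i => ?_
  rw [← one_tmul_eq_zero_iff', TensorProduct.tmul_smul]
  refine hK i n g hg _ ?_
  rw [LinearMap.lTensor_tmul, one_tmul_eq_zero_iff']
  exact Submodule.smul_mono_left le_sup_left hx

theorem mem_loc {R M : Type} [CommRing R] [AddCommGroup M] [Module R M] (p : Ideal R) [hp : p.IsPrime]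
    (z : LocalizedModule p.primeCompl M)
    (hz : z ∈ maximalIdeal (Localization.AtPrime p) •
      (⊤ : Submodule (Localization.AtPrime p) (LocalizedModule p.primeCompl M))) :
    ∃ s : p.primeCompl, ∃ w ∈ p • (⊤ : Submodule R M), z = LocalizedModule.mk w s := by
  induction hz using Submodule.smul_induction_on' with
  | smul r hr m _ =>
    rw [← Localization.AtPrime.map_eq_maximalIdeal,
      IsLocalization.mem_map_algebraMap_iff p.primeCompl] at hr
    obtain ⟨⟨⟨b, hb⟩, s⟩, hbs⟩ := hr
    have hr : r = Localization.mk b s := by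
      rw [Localization.mk_eq_mk', IsLocalization.eq_mk'_iff_mul_eq]; exact hbs
    induction m using LocalizedModule.induction_on with
    | _ m t =>
    refine ⟨s * t, b • m, Submodule.smul_mem_smul hb trivial, ?_⟩
    rw [hr, LocalizedModule.mk_smul_mk]
  | add x _ y _ hx hy =>
    obtain ⟨s, w, hw, rfl⟩ := hx
    obtain ⟨t, v, hv, rfl⟩ := hy
    refine ⟨s * t, t • w + s • v, add_mem ?_ ?_, LocalizedModule.mk_add_mk⟩
    · exact Submodule.smul_mem _ (t : R) hw
    · exact Submodule.smul_mem _ (s : R) hv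

theorem mk_mem_loc {R M : Type} [CommRing R] [AddCommGroup M] [Module R M] (p : Ideal R) [hp : p.IsPrime]
    (x : M) (s : p.primeCompl) :
    LocalizedModule.mk x s ∈ maximalIdeal (Localization.AtPrime p) •
      (⊤ : Submodule (Localization.AtPrime p) (LocalizedModule p.primeCompl M)) ↔
    ∃ t ∉ p, t • x ∈ p • (⊤ : Submodule R M) := by
  constructor
  · intro h
    obtain ⟨t, w, hw, h⟩ := mem_loc p _ h
    rw [LocalizedModule.mk_eq] at h
    obtain ⟨u, hu⟩ := h
    refine ⟨u * t, (u * t).2, ?_⟩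
    have : ((u : R) * t) • x = (u : R) • (s : R) • w := by
      rw [mul_smul]; exact hu
    rw [this]
    exact Submodule.smul_mem _ _ (Submodule.smul_mem _ _ hw)
  · rintro ⟨t, ht, h⟩
    have key : ∀ y ∈ p • (⊤ : Submodule R M), ∀ u : p.primeCompl,
        LocalizedModule.mk y u ∈ maximalIdeal (Localization.AtPrime p) •
      (⊤ : Submodule (Localization.AtPrime p) (LocalizedModule p.primeCompl M)) := by
      intro y hy
      induction hy using Submodule.smul_induction_on' with
      | smul r hr m _ =>
        intro u
        have : LocalizedModule.mk (r • m) u =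
            algebraMap R (Localization.AtPrime p) r • LocalizedModule.mk m u := by
          rw [algebraMap_smul, LocalizedModule.smul'_mk]
        rw [this]
        refine Submodule.smul_mem_smul ?_ trivial
        rw [← Localization.AtPrime.map_eq_maximalIdeal]
        exact Ideal.mem_map_of_mem _ hr
      | add x _ y _ hx hy =>
        intro u
        have : LocalizedModule.mk (x + y) u = LocalizedModule.mk x u + LocalizedModule.mk y u := by
          rw [LocalizedModule.mk_add_mk, ← smul_add]
          exact (LocalizedModule.mk_cancel_common_left _ _ _).symm
        rw [this]
        exact add_mem (hx u) (hy u)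
    have := key _ h (⟨t, ht⟩ * s)
    have e : LocalizedModule.mk (t • x) ((⟨t, ht⟩ : p.primeCompl) * s) = LocalizedModule.mk x s :=
      LocalizedModule.mk_cancel_common_left (⟨t, ht⟩ : p.primeCompl) s x
    rwa [e] at this

theorem free_loc {R : Type} [CommRing R] [IsNoetherianRing R] 
    {p : Ideal R} [hp : p.IsPrime] {a : R} (ha : a ∉ p) {K : Type} [AddCommGroup K] [Module R K]
    {n : ℕ} (g : (Fin n → R) →ₗ[R] K)
    (hg : Function.Surjective g)
    (H : ∀ x : LinearMap.ker g, (x : Fin n → R) ∈ p • (⊤ : Submodule R (Fin n → R)) →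
     a • x ∈ p • (⊤ : Submodule R (LinearMap.ker g))) :
    Module.Free (Localization.AtPrime p) (LocalizedModule p.primeCompl K) := by
  have hF : Module.Free (Localization.AtPrime p) (LocalizedModule p.primeCompl (Fin n → R)) :=
    Module.free_of_isLocalizedModule p.primeCompl (LocalizedModule.mkLinearMap p.primeCompl (Fin n → R))
  have hex : Function.Exact (LocalizedModule.map p.primeCompl (LinearMap.ker g).subtype)
      (LocalizedModule.map p.primeCompl g) :=
    LocalizedModule.map_exact p.primeCompl (LinearMap.ker g).subtype g
      (LinearMap.exact_subtype_ker_map g)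
  refine free_of_forall_mem (A := LocalizedModule p.primeCompl (LinearMap.ker g))
    (B := LocalizedModule p.primeCompl (Fin n → R))
    (LocalizedModule.map p.primeCompl (LinearMap.ker g).subtype)
    (LocalizedModule.map p.primeCompl g) (LocalizedModule.map_surjective _ _ hg)
    hex ?_
  intro x hx
  induction x using LocalizedModule.induction_on with
  | _ m s =>
  rw [LocalizedModule.map_mk, mk_mem_loc] at hx
  obtain ⟨t, ht, h⟩ := hx
  rw [mk_mem_loc]
  refine ⟨a * t, fun h => (hp.mem_or_mem h).elim ha ht, ?_⟩
  rw [mul_smul]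
  exact H (t • m) h

theorem resfield_equiv {R : Type} [CommRing R] (p : Ideal R) [hp : p.IsPrime] :
    Nonempty (ResidueField (Localization.AtPrime p) ≃ₗ[Localization.AtPrime p]
      LocalizedModule p.primeCompl (R ⧸ p)) := by
  let f := LinearMap.toSpanSingleton (Localization.AtPrime p) (LocalizedModule p.primeCompl (R ⧸ p))
    (LocalizedModule.mk 1 1)
  have hf : Function.Surjective f := by
    intro z
    induction z using LocalizedModule.induction_on with
    | _ m s =>
    obtain ⟨r, rfl⟩ := Ideal.Quotient.mk_surjective m
    refine ⟨Localization.mk r s, ?_⟩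
    simp only [f, LinearMap.toSpanSingleton_apply, LocalizedModule.mk_smul_mk, mul_one]
    congr 1
    rw [Algebra.smul_def, mul_one]; rfl
  have hk : LinearMap.ker f = maximalIdeal (Localization.AtPrime p) := by
    symm
    refine (maximalIdeal.isMaximal _).eq_of_le ?_ ?_
    · intro h
      have h1 : (1 : Localization.AtPrime p) ∈ LinearMap.ker f := by rw [h]; trivial
      simp only [f, LinearMap.mem_ker, LinearMap.toSpanSingleton_apply, one_smul] at h1
      rw [← LocalizedModule.zero_mk 1, LocalizedModule.mk_eq] at h1
      obtain ⟨u, hu⟩ := h1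
      have hu : (u : R) • (1 : R ⧸ p) = 0 := by
        rw [smul_zero, smul_zero, one_smul] at hu
        exact hu
      rw [Algebra.smul_def, mul_one] at hu
      exact u.2 (Ideal.Quotient.eq_zero_iff_mem.1 hu)
    · rw [← Localization.AtPrime.map_eq_maximalIdeal, Ideal.map_le_iff_le_comap]
      intro r hr
      change f (algebraMap R _ r) = 0
      simp only [f, LinearMap.toSpanSingleton_apply, algebraMap_smul, LocalizedModule.smul'_mk]
      rw [Algebra.smul_def, mul_one]
      have : algebraMap R (R ⧸ p) r = 0 := Ideal.Quotient.eq_zero_iff_mem.2 hr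
      rw [this, LocalizedModule.zero_mk]
  exact ⟨(Submodule.quotEquivOfEq _ _ hk.symm).trans (f.quotKerEquivOfSurjective hf)⟩

theorem main_thm (R : Type) [CommRing R] [IsNoetherianRing R] [IsLocalRing R]
    (hCM : IsCMLocalRing R)
    (hfin : ∃ (n : ℕ) (f : Fin n → ModuleCat.{0} R),
      ∀ M : ModuleCat.{0} R, MemCM0 R M → IndecomposableModule R M →
        ∃ i : Fin n, Nonempty ((M : Type) ≃ₗ[R] (f i : Type))) :
    ∀ (p : Ideal R) [p.IsPrime], p ≠ maximalIdeal R →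
      IsRegularLocal (Localization.AtPrime p) := by
  intro p hp hpm
  have : IsNoetherianRing (Localization.AtPrime p) :=
    IsLocalization.isNoetherianRing p.primeCompl _ inferInstance
  obtain ⟨a, ha, hfac⟩ := exists_uniform_fac hfin p hpm
  obtain ⟨d, hd⟩ := dim_eq_nat R
  obtain ⟨K, _, _, hKf, hK, hPD⟩ := exists_syz_N (R := R) d (R ⧸ p)
  have hTK : ∀ i : ℕ, TK a (R ⧸ (p ⊔ maximalIdeal R ^ i)) 0 K := by
    intro i
    apply hK
    obtain ⟨Y, _, _, hY, hT⟩ := exists_syz_X hCM d 0 _ (good_quot p i)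
    rw [zero_add] at hY
    have := hT a 0 (R ⧸ p) (TK.of_fac (hfac Y (good_memCM0 hd Y hY)) _)
    rwa [zero_add] at this
  obtain ⟨n, g, hg⟩ := Module.Finite.exists_fin' R K
  have hfree := free_loc ha g hg (fun x hx => key_mem hTK g hg x hx)
  have h0 := hPD p 0 (PD.zero_iff_free.2 hfree)
  obtain ⟨e⟩ := resfield_equiv p
  exact serre _ _ (h0.of_equiv e)

/-- Let `R` be a Cohen-Macaulay noetherian local ring. If there are only
finitely many isomorphism classes of indecomposable modules in `CM₀(R)`, then `R` is an
isolated singularity. -/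
theorem stmt19 (R : Type) [CommRing R] [IsNoetherianRing R] [IsLocalRing R]
    (hCM : IsCMLocalRing R)
    (hfin : ∃ (n : ℕ) (f : Fin n → ModuleCat.{0} R),
      ∀ M : ModuleCat.{0} R, MemCM0 R M → IndecomposableModule R M →
        ∃ i : Fin n, Nonempty ((M : Type) ≃ₗ[R] (f i : Type))) :
    ∀ (p : Ideal R) [p.IsPrime], p ≠ maximalIdeal R →
      IsRegularLocal (Localization.AtPrime p) := by
  exact main_thm R hCM hfin

end
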